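/- Let S and A be nonempty finite sets, let r : S×A → [0,1], γ ∈ (0,1), ε > 0, and let p̂ be a nominal transition kernel with p̂(s'|s,a) > 0 for all s,a,s'. Define the KL-ball uncertainty sets P_ε(s,a) = { p ∈ Δ_S : D(p‖p̂(·|s,a)) ≤ ε }. Then for every stationary policy π and every s ∈ S: 0 ≤ V^π_{p̂}(s) − V^π_{P_ε}(s) ≤ (γ/(1−γ)) · osc(V^π_{p̂}) · √(2ε) ≤ (γ/(1−γ)²) · √(2ε), where V^π_{p̂} is the unique fixed point of the standard evaluation operator under p̂, V^π_{P_ε} is the unique fixed point of the robust evaluation operator with uncertainty sets P_ε, and osc(V) = max_s V(s) − min_s V(s). -/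

import Mathlib

/-!
Both value functions are fixed points of robust evaluation operators: the nominal one belongs to the
singletons `{p̂(·|s,a)}`, the robust one to the KL balls. Such operators are monotone, and adding a
constant `k` to the argument adds `γ k` to the value, so at a point maximizing `U - V` a defect `c`
in `U ≤ T U + c`, `T V ≤ V` costs at most `c / (1 - γ)` in `U ≤ V + c / (1 - γ)`. Since the KL ball
contains its centre, the robust value is a subsolution of the nominal equation with no defect. By
Pinsker's inequality, the nominal value is a subsolution of the robust equation with defect
`γ · osc · √(ε / 2)`. Comparison with constant functions bounds the oscillation.
-/

open Function Set InformationTheory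

section Pinsker

/-- The constants come from `f t = 2 (t + 2) klFun t - 3 (t - 1)²`, which satisfies
`f 1 = f' 1 = 0` and `f'' t = 4 (log t - (1 - 1 / t)) ≥ 0`. -/
lemma three_mul_sub_one_sq_le_mul_klFun {t : ℝ} (ht : 0 ≤ t) :
    3 * (t - 1) ^ 2 ≤ 2 * (t + 2) * klFun t := by
  let f : ℝ → ℝ := fun t ↦ 2 * (t + 2) * klFun t - 3 * (t - 1) ^ 2
  let f' : ℝ → ℝ := fun t ↦ 2 * klFun t + 2 * (t + 2) * Real.log t - 6 * (t - 1)
  have hf' {t : ℝ} (ht : 0 < t) : HasDerivAt f (f' t) t := by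
    refine (((((hasDerivAt_id t).add_const 2).const_mul 2).mul (hasDerivAt_klFun ht.ne')).sub
      ((((hasDerivAt_id t).sub_const 1).pow 2).const_mul 3)).congr_deriv ?_
    simp only [id, f']
    ring
  have hf'' {t : ℝ} (ht : 0 < t) : HasDerivAt f' (4 * (Real.log t - (1 - t⁻¹))) t := by
    refine ((((hasDerivAt_klFun ht.ne').const_mul 2).add
      ((((hasDerivAt_id t).add_const 2).const_mul 2).mul (Real.hasDerivAt_log ht.ne'))).sub
      (((hasDerivAt_id t).sub_const 1).const_mul 6)).congr_deriv ?_
    simp only [id]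
    field_simp
    ring
  have hconvex : ConvexOn ℝ (Ici 0) f := by
    refine convexOn_of_hasDerivWithinAt2_nonneg (convex_Ici 0) (by fun_prop)
      (f' := f') (f'' := fun t ↦ 4 * (Real.log t - (1 - t⁻¹))) ?_ ?_ ?_ <;>
      intro t ht <;> rw [interior_Ici] at ht
    · exact (hf' ht).hasDerivWithinAt
    · exact (hf'' ht).hasDerivWithinAt
    · linarith [Real.one_sub_inv_le_log_of_pos ht]
  have hmin : IsMinOn f (Ici 0) 1 := by
    refine hconvex.isMinOn_of_rightDeriv_eq_zero (by simp) ?_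
    rw [(hf' one_pos).hasDerivWithinAt.derivWithin (uniqueDiffWithinAt_Ioi 1)]
    simp [f', klFun_one]
  have h1 : f 1 ≤ f t := hmin ht
  simp only [f, klFun_one] at h1
  linarith

variable {X : Type*} [Fintype X] {p q V : X → ℝ} {lo hi ε : ℝ}

/-- The Kullback–Leibler divergence of weight vectors on a finite type, with values in `ℝ`.
It has its usual meaning only if `p` vanishes wherever `q` does: a term with `q x = 0` contributes
`0` instead of `∞`. -/
noncomputable def discreteKL (p q : X → ℝ) : ℝ :=
  ∑ x, p x * Real.log (p x / q x)

lemma discreteKL_self (p : X → ℝ) : discreteKL p p = 0 := by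
  refine Finset.sum_eq_zero fun x _ ↦ ?_
  rcases eq_or_ne (p x) 0 with h | h <;> simp [h]

lemma discreteKL_eq_sum_mul_klFun (hac : ∀ x, q x = 0 → p x = 0)
    (hsum : ∑ x, p x = ∑ x, q x) : discreteKL p q = ∑ x, q x * klFun (p x / q x) := by
  have hterm (x : X) :
      q x * klFun (p x / q x) = p x * Real.log (p x / q x) + (q x - p x) := by
    rcases eq_or_ne (q x) 0 with hqx | hqx
    · simp [hqx, hac x hqx]
    · rw [klFun_apply]
      field_simp
      ring
  simp only [hterm, Finset.sum_add_distrib, Finset.sum_sub_distrib, hsum, sub_self, add_zero,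
    discreteKL]

lemma three_mul_sub_sq_le_mul_klFun_div {a b : ℝ} (ha : 0 ≤ a) (hb : 0 ≤ b)
    (hab : b = 0 → a = 0) : 3 * (a - b) ^ 2 ≤ 2 * (a + 2 * b) * (b * klFun (a / b)) := by
  rcases hb.eq_or_lt with rfl | hb
  · simp [hab rfl]
  calc 3 * (a - b) ^ 2 = b ^ 2 * (3 * (a / b - 1) ^ 2) := by field_simp
    _ ≤ b ^ 2 * (2 * (a / b + 2) * klFun (a / b)) := by
        gcongr ?_ * ?_
        exact three_mul_sub_one_sq_le_mul_klFun (div_nonneg ha hb.le)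
    _ = 2 * (a + 2 * b) * (b * klFun (a / b)) := by field_simp

/-- **Pinsker's inequality** -/
theorem sq_sum_abs_sub_le_two_mul_discreteKL (hp : p ∈ stdSimplex ℝ X) (hq : q ∈ stdSimplex ℝ X)
    (hac : ∀ x, q x = 0 → p x = 0) : (∑ x, |p x - q x|) ^ 2 ≤ 2 * discreteKL p q := by
  have hpoint (x : X) :
      |p x - q x| ^ 2 ≤ (p x + 2 * q x) * (2 / 3 * (q x * klFun (p x / q x))) := by
    rw [sq_abs]
    linarith [three_mul_sub_sq_le_mul_klFun_div (hp.1 x) (hq.1 x) (hac x)]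
  calc (∑ x, |p x - q x|) ^ 2
      ≤ (∑ x, (p x + 2 * q x)) * ∑ x, 2 / 3 * (q x * klFun (p x / q x)) :=
        Finset.sum_sq_le_sum_mul_sum_of_sq_le_mul _
          (fun x _ ↦ by linarith [hp.1 x, hq.1 x])
          (fun x _ ↦ mul_nonneg (by norm_num)
            (mul_nonneg (hq.1 x) (klFun_nonneg (div_nonneg (hp.1 x) (hq.1 x)))))
          fun x _ ↦ hpoint x
    _ = 2 * discreteKL p q := by
        rw [discreteKL_eq_sum_mul_klFun hac (hp.2.trans hq.2.symm),
          Finset.sum_add_distrib, ← Finset.mul_sum, ← Finset.mul_sum, hp.2, hq.2]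
        ring

lemma sum_mul_sub_sum_mul_le_mul_sum_abs (hsum : ∑ x, p x = ∑ x, q x)
    (hV : ∀ x, V x ∈ Icc lo hi) :
    ∑ x, q x * V x - ∑ x, p x * V x ≤ (hi - lo) / 2 * ∑ x, |p x - q x| := by
  have hcentre : ∑ x, q x * V x - ∑ x, p x * V x
      = ∑ x, (q x - p x) * (V x - (lo + hi) / 2) := by
    simp only [mul_sub, sub_mul, Finset.sum_sub_distrib, ← Finset.sum_mul, hsum]
    ring
  rw [hcentre, Finset.mul_sum]
  refine Finset.sum_le_sum fun x _ ↦ ?_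
  have hdev : |V x - (lo + hi) / 2| ≤ (hi - lo) / 2 :=
    abs_le.2 ⟨by linarith [(hV x).1], by linarith [(hV x).2]⟩
  calc (q x - p x) * (V x - (lo + hi) / 2)
      ≤ |q x - p x| * |V x - (lo + hi) / 2| := (le_abs_self _).trans (abs_mul _ _).le
    _ ≤ (hi - lo) / 2 * |p x - q x| := by
        rw [mul_comm, abs_sub_comm (q x)]
        gcongr

/-- The KL ball `{p ∈ Δ_X : D(p‖q) ≤ ε}`. The condition that `p` vanishes wherever `q` does
expresses `D(p‖q) < ∞`, which the real-valued `discreteKL` cannot. -/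
def klBall (q : X → ℝ) (ε : ℝ) : Set (X → ℝ) :=
  {p ∈ stdSimplex ℝ X | (∀ x, q x = 0 → p x = 0) ∧ discreteKL p q ≤ ε}

lemma klBall_subset_stdSimplex (q : X → ℝ) (ε : ℝ) : klBall q ε ⊆ stdSimplex ℝ X :=
  sep_subset _ _

lemma self_mem_klBall (hq : q ∈ stdSimplex ℝ X) (hε : 0 ≤ ε) : q ∈ klBall q ε :=
  ⟨hq, fun _ ↦ id, (discreteKL_self q).trans_le hε⟩

lemma sum_abs_sub_le_of_mem_klBall (hp : p ∈ klBall q ε) (hq : q ∈ stdSimplex ℝ X) :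
    ∑ x, |p x - q x| ≤ √(2 * ε) := by
  obtain ⟨hp, hac, hkl⟩ := hp
  refine Real.le_sqrt_of_sq_le ?_
  linarith [sq_sum_abs_sub_le_two_mul_discreteKL hp hq hac]

lemma sum_mul_le_add_of_mem_klBall (hp : p ∈ klBall q ε) (hq : q ∈ stdSimplex ℝ X)
    (hV : ∀ x, V x ∈ Icc lo hi) :
    ∑ x, q x * V x ≤ ∑ x, p x * V x + (hi - lo) / 2 * √(2 * ε) := by
  obtain ⟨x, -⟩ : (Finset.univ : Finset X).Nonempty :=
    Finset.nonempty_of_sum_ne_zero (hq.2.trans_ne one_ne_zero)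
  have hlohi : 0 ≤ (hi - lo) / 2 := by linarith [(hV x).1, (hV x).2]
  have hmean := sum_mul_sub_sum_mul_le_mul_sum_abs (hp.1.2.trans hq.2.symm) hV
  linarith [mul_le_mul_of_nonneg_left (sum_abs_sub_le_of_mem_klBall hp hq) hlohi]

end Pinsker

section WorstMean

variable {X : Type*} [Fintype X] {P Q : Set (X → ℝ)} {p V : X → ℝ} {c : ℝ}

/-- The worst-case expectation of `V` over the uncertainty set `P`. Like every real infimum it is
`0` when `P` is empty or the expectations are unbounded below. -/
noncomputable def worstMean (P : Set (X → ℝ)) (V : X → ℝ) : ℝ :=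
  ⨅ p : P, ∑ x, p.1 x * V x

lemma worstMean_singleton (p V : X → ℝ) : worstMean {p} V = ∑ x, p x * V x := by
  simp [worstMean]

lemma bddBelow_range_sum_mul (hP : P ⊆ stdSimplex ℝ X) (V : X → ℝ) :
    BddBelow (range fun p : P ↦ ∑ x, p.1 x * V x) := by
  have hbdd : BddBelow ((fun p : X → ℝ ↦ ∑ x, p x * V x) '' stdSimplex ℝ X) :=
    ((isCompact_stdSimplex ℝ X).image (by fun_prop)).bddBelow
  refine hbdd.mono ?_
  rintro _ ⟨p, rfl⟩
  exact mem_image_of_mem _ (hP p.2)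

lemma worstMean_le (hP : P ⊆ stdSimplex ℝ X) (hp : p ∈ P) (V : X → ℝ) :
    worstMean P V ≤ ∑ x, p x * V x :=
  ciInf_le (bddBelow_range_sum_mul hP V) ⟨p, hp⟩

lemma le_worstMean (hP : P.Nonempty) (h : ∀ p ∈ P, c ≤ ∑ x, p x * V x) : c ≤ worstMean P V :=
  have := hP.to_subtype
  le_ciInf fun p ↦ h p p.2

lemma worstMean_mono (hP : P ⊆ stdSimplex ℝ X) : Monotone (worstMean P) := fun V _ hVW ↦
  ciInf_mono (bddBelow_range_sum_mul hP V) fun p ↦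
    Finset.sum_le_sum fun x _ ↦ mul_le_mul_of_nonneg_left (hVW x) ((hP p.2).1 x)

lemma worstMean_anti (hQ : Q ⊆ stdSimplex ℝ X) (hP : P.Nonempty) (hPQ : P ⊆ Q) (V : X → ℝ) :
    worstMean Q V ≤ worstMean P V :=
  le_worstMean hP fun _ hp ↦ worstMean_le hQ (hPQ hp) V

lemma worstMean_const (hP : P ⊆ stdSimplex ℝ X) (hne : P.Nonempty) (k : ℝ) :
    worstMean P (const X k) = k := by
  have := hne.to_subtype
  have hmean (p : P) : ∑ x, p.1 x * const X k x = k := by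
    simp [← Finset.sum_mul, (hP p.2).2]
  simp only [worstMean, hmean, ciInf_const]

lemma worstMean_add_const (hP : P ⊆ stdSimplex ℝ X) (hne : P.Nonempty) (V : X → ℝ) (k : ℝ) :
    worstMean P (V + const X k) = worstMean P V + k := by
  have := hne.to_subtype
  have hmean (p : P) : ∑ x, p.1 x * (V + const X k) x = ∑ x, p.1 x * V x + k := by
    simp [mul_add, Finset.sum_add_distrib, ← Finset.sum_mul, (hP p.2).2]
  simp only [worstMean, hmean, ciInf_add (bddBelow_range_sum_mul hP V)]

end WorstMean

/-- At a maximizer of `U - V`, shifting `V` by `k = max (U - V)` gives `k ≤ γ k + c`. -/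
theorem le_add_of_le_map_add {S : Type*} [Finite S] {T : (S → ℝ) → S → ℝ} {γ c : ℝ}
    {U V : S → ℝ} (hmono : Monotone T)
    (hshift : ∀ W k, T (W + const S k) = T W + const S (γ * k)) (hγ : γ < 1)
    (hU : ∀ s, U s ≤ T U s + c) (hV : ∀ s, T V s ≤ V s) (s : S) : U s ≤ V s + c / (1 - γ) := by
  have : Nonempty S := ⟨s⟩
  obtain ⟨s₀, hs₀⟩ := Finite.exists_max fun s ↦ U s - V s
  set k := U s₀ - V s₀
  have hle : U ≤ V + const S k := fun s ↦ by
    simpa [add_comm] using sub_le_iff_le_add.1 (hs₀ s)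
  have hTU : T U s₀ ≤ T V s₀ + γ * k := by
    simpa [hshift] using hmono hle s₀
  have hkc : k ≤ c / (1 - γ) := by
    rw [le_div_iff₀ (sub_pos.2 hγ)]
    linarith [hU s₀, hV s₀]
  linarith [hs₀ s]

section RobustEval

variable {S A : Type*} [Fintype S] [Fintype A] {r : S → A → ℝ} {γ : ℝ} {π : S → A → ℝ}
  {P Q : S → A → Set (S → ℝ)} {V W : S → ℝ} {lo hi δ : ℝ}

/-- The robust policy evaluation operator for the uncertainty sets `P s a`. The standard operator
for a kernel `p` is the case of the singletons `{p s a}`. -/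
noncomputable def robustEval (r : S → A → ℝ) (γ : ℝ) (π : S → A → ℝ)
    (P : S → A → Set (S → ℝ)) (V : S → ℝ) : S → ℝ :=
  fun s ↦ ∑ a, π s a * (r s a + γ * worstMean (P s a) V)

lemma robustEval_mono (hγ : 0 ≤ γ) (hπ : ∀ s a, 0 ≤ π s a)
    (hP : ∀ s a, P s a ⊆ stdSimplex ℝ S) : Monotone (robustEval r γ π P) := by
  intro V W hVW s
  refine Finset.sum_le_sum fun a _ ↦ mul_le_mul_of_nonneg_left ?_ (hπ s a)
  gcongr
  exact worstMean_mono (hP s a) hVW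

lemma robustEval_add_const (hπ : ∀ s, ∑ a, π s a = 1) (hP : ∀ s a, P s a ⊆ stdSimplex ℝ S)
    (hne : ∀ s a, (P s a).Nonempty) (V : S → ℝ) (k : ℝ) :
    robustEval r γ π P (V + const S k) = robustEval r γ π P V + const S (γ * k) := by
  ext s
  simp only [robustEval, worstMean_add_const (hP s _) (hne s _), Pi.add_apply, const_apply,
    mul_add, Finset.sum_add_distrib, ← Finset.sum_mul, hπ s]
  ring

lemma robustEval_le_add (hγ : 0 ≤ γ) (hπ : ∀ s, π s ∈ stdSimplex ℝ A)
    (h : ∀ s a, worstMean (P s a) V ≤ worstMean (Q s a) V + δ) (s : S) :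
    robustEval r γ π P V s ≤ robustEval r γ π Q V s + γ * δ := by
  calc robustEval r γ π P V s
      ≤ ∑ a, π s a * (r s a + γ * (worstMean (Q s a) V + δ)) := by
        refine Finset.sum_le_sum fun a _ ↦ mul_le_mul_of_nonneg_left ?_ ((hπ s).1 a)
        gcongr
        exact h s a
    _ = robustEval r γ π Q V s + γ * δ := by
        simp only [robustEval, mul_add, Finset.sum_add_distrib, ← Finset.sum_mul, (hπ s).2]
        ring

lemma robustEval_const_mem_Icc (hr : ∀ s a, r s a ∈ Icc lo hi) (hπ : ∀ s, π s ∈ stdSimplex ℝ A)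
    (hP : ∀ s a, P s a ⊆ stdSimplex ℝ S) (hne : ∀ s a, (P s a).Nonempty) (k : ℝ) (s : S) :
    robustEval r γ π P (const S k) s ∈ Icc (lo + γ * k) (hi + γ * k) := by
  refine (convex_Icc _ _).sum_mem (fun a _ ↦ (hπ s).1 a) (hπ s).2 fun a _ ↦ ?_
  rw [worstMean_const (hP s a) (hne s a)]
  exact ⟨by linarith [(hr s a).1], by linarith [(hr s a).2]⟩

theorem le_add_of_isFixedPt_robustEval (hγ0 : 0 ≤ γ) (hγ1 : γ < 1) (hπ : ∀ s, π s ∈ stdSimplex ℝ A)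
    (hQ : ∀ s a, Q s a ⊆ stdSimplex ℝ S) (hQne : ∀ s a, (Q s a).Nonempty)
    (hV : IsFixedPt (robustEval r γ π P) V) (hW : IsFixedPt (robustEval r γ π Q) W)
    (h : ∀ s a, worstMean (P s a) V ≤ worstMean (Q s a) V + δ) (s : S) :
    V s ≤ W s + γ * δ / (1 - γ) :=
  le_add_of_le_map_add (robustEval_mono hγ0 (fun s ↦ (hπ s).1) hQ)
    (robustEval_add_const (fun s ↦ (hπ s).2) hQ hQne) hγ1
    (fun s ↦ (congrFun hV s).ge.trans (robustEval_le_add hγ0 hπ h s))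
    (fun s ↦ (congrFun hW s).le) s

theorem le_of_isFixedPt_robustEval (hγ0 : 0 ≤ γ) (hγ1 : γ < 1) (hπ : ∀ s, π s ∈ stdSimplex ℝ A)
    (hQ : ∀ s a, Q s a ⊆ stdSimplex ℝ S) (hPne : ∀ s a, (P s a).Nonempty)
    (hPQ : ∀ s a, P s a ⊆ Q s a) (hV : IsFixedPt (robustEval r γ π P) V)
    (hW : IsFixedPt (robustEval r γ π Q) W) : W ≤ V := by
  have hanti (s : S) (a : A) : worstMean (Q s a) W ≤ worstMean (P s a) W + 0 :=
    (worstMean_anti (hQ s a) (hPne s a) (hPQ s a) W).trans_eq (add_zero _).symm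
  intro s
  simpa using le_add_of_isFixedPt_robustEval hγ0 hγ1 hπ (fun s a ↦ (hPQ s a).trans (hQ s a)) hPne
    hW hV hanti s

theorem mem_Icc_of_isFixedPt_robustEval (hr : ∀ s a, r s a ∈ Icc lo hi) (hγ0 : 0 ≤ γ) (hγ1 : γ < 1)
    (hπ : ∀ s, π s ∈ stdSimplex ℝ A) (hP : ∀ s a, P s a ⊆ stdSimplex ℝ S)
    (hne : ∀ s a, (P s a).Nonempty) (hV : IsFixedPt (robustEval r γ π P) V) (s : S) :
    V s ∈ Icc (lo / (1 - γ)) (hi / (1 - γ)) := by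
  have hmono := robustEval_mono (r := r) hγ0 (fun s ↦ (hπ s).1) hP
  have hshift := robustEval_add_const (r := r) (γ := γ) (fun s ↦ (hπ s).2) hP hne
  have hconst (k : ℝ) := robustEval_const_mem_Icc (γ := γ) hr hπ hP hne k
  have hfix (c : ℝ) : c + γ * (c / (1 - γ)) = c / (1 - γ) := by
    have hγ : 1 - γ ≠ 0 := (sub_pos.2 hγ1).ne'
    field_simp
    ring
  constructor
  · simpa using le_add_of_le_map_add (U := const S (lo / (1 - γ))) (c := 0) hmono hshift hγ1
      (fun s ↦ by simpa [hfix] using (hconst (lo / (1 - γ)) s).1)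
      (fun s ↦ (congrFun hV s).le) s
  · simpa using le_add_of_le_map_add (V := const S (hi / (1 - γ))) (c := 0) hmono hshift hγ1
      (fun s ↦ by simpa using (congrFun hV s).ge)
      (fun s ↦ (hconst (hi / (1 - γ)) s).2.trans_eq (hfix hi)) s

end RobustEval

section Oscillation

variable {X : Type*} [Fintype X] [Nonempty X] {V : X → ℝ} {lo hi : ℝ}

/-- The span `max V - min V` of a function on a nonempty finite type. -/
noncomputable def osc (V : X → ℝ) : ℝ :=
  Finset.univ.sup' Finset.univ_nonempty V - Finset.univ.inf' Finset.univ_nonempty V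

lemma mem_Icc_inf'_sup' (V : X → ℝ) (x : X) :
    V x ∈ Icc (Finset.univ.inf' Finset.univ_nonempty V)
      (Finset.univ.sup' Finset.univ_nonempty V) :=
  ⟨Finset.inf'_le V (Finset.mem_univ x), Finset.le_sup' V (Finset.mem_univ x)⟩

lemma osc_nonneg (V : X → ℝ) : 0 ≤ osc V :=
  have hV := mem_Icc_inf'_sup' V (Classical.arbitrary X)
  sub_nonneg.2 (hV.1.trans hV.2)

lemma osc_le_sub (hV : ∀ x, V x ∈ Icc lo hi) : osc V ≤ hi - lo :=
  sub_le_sub (Finset.sup'_le _ _ fun x _ ↦ (hV x).2) (Finset.le_inf' _ _ fun x _ ↦ (hV x).1)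

end Oscillation

section ValueDrop

variable {S A : Type*} [Fintype S] [Fintype A] {r : S → A → ℝ} {γ ε : ℝ}
  {phat : S → A → S → ℝ} {π : S → A → ℝ} {V W : S → ℝ}

theorem nominal_value_sub_klBall_value_le [Nonempty S] (hγ0 : 0 ≤ γ) (hγ1 : γ < 1) (hε : 0 ≤ ε)
    (hphat : ∀ s a, phat s a ∈ stdSimplex ℝ S) (hπ : ∀ s, π s ∈ stdSimplex ℝ A)
    (hV : IsFixedPt (robustEval r γ π fun s a ↦ {phat s a}) V)
    (hW : IsFixedPt (robustEval r γ π fun s a ↦ klBall (phat s a) ε) W) (s : S) :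
    V s - W s ≤ γ / (1 - γ) * (osc V / 2) * √(2 * ε) := by
  have hball (s : S) (a : A) : phat s a ∈ klBall (phat s a) ε := self_mem_klBall (hphat s a) hε
  have hworst (s : S) (a : A) :
      worstMean {phat s a} V ≤ worstMean (klBall (phat s a) ε) V + osc V / 2 * √(2 * ε) := by
    rw [worstMean_singleton, ← sub_le_iff_le_add]
    refine le_worstMean ⟨_, hball s a⟩ fun p hp ↦ sub_le_iff_le_add.2 ?_
    exact sum_mul_le_add_of_mem_klBall hp (hphat s a) (mem_Icc_inf'_sup' V)
  calc V s - W s ≤ γ * (osc V / 2 * √(2 * ε)) / (1 - γ) :=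
        sub_le_iff_le_add'.2 <| le_add_of_isFixedPt_robustEval hγ0 hγ1 hπ
          (fun _ _ ↦ klBall_subset_stdSimplex _ _) (fun s a ↦ ⟨_, hball s a⟩) hV hW hworst s
    _ = γ / (1 - γ) * (osc V / 2) * √(2 * ε) := by ring

theorem robust_value_drop_general [Nonempty S] {lo hi : ℝ} (hr : ∀ s a, r s a ∈ Icc lo hi)
    (hγ0 : 0 ≤ γ) (hγ1 : γ < 1) (hε : 0 ≤ ε) (hphat : ∀ s a, phat s a ∈ stdSimplex ℝ S)
    (hπ : ∀ s, π s ∈ stdSimplex ℝ A)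
    (hV : IsFixedPt (robustEval r γ π fun s a ↦ {phat s a}) V)
    (hW : IsFixedPt (robustEval r γ π fun s a ↦ klBall (phat s a) ε) W) :
    (∀ s, 0 ≤ V s - W s) ∧
    (∀ s, V s - W s ≤ γ / (1 - γ) * osc V * √(2 * ε)) ∧
    γ / (1 - γ) * osc V * √(2 * ε) ≤ γ / (1 - γ) ^ 2 * (hi - lo) * √(2 * ε) := by
  have hsingleton (s : S) (a : A) : {phat s a} ⊆ stdSimplex ℝ S :=
    singleton_subset_iff.2 (hphat s a)
  have hfactor : 0 ≤ γ / (1 - γ) := div_nonneg hγ0 (sub_nonneg.2 hγ1.le)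
  refine ⟨fun s ↦ sub_nonneg.2 ?_, fun s ↦ ?_, ?_⟩
  · exact le_of_isFixedPt_robustEval hγ0 hγ1 hπ (fun _ _ ↦ klBall_subset_stdSimplex _ _)
      (fun _ _ ↦ singleton_nonempty _)
      (fun s a ↦ singleton_subset_iff.2 (self_mem_klBall (hphat s a) hε)) hV hW s
  · refine (nominal_value_sub_klBall_value_le hγ0 hγ1 hε hphat hπ hV hW s).trans ?_
    gcongr
    exact half_le_self (osc_nonneg V)
  · have hosc : osc V ≤ hi / (1 - γ) - lo / (1 - γ) :=
      osc_le_sub <| mem_Icc_of_isFixedPt_robustEval hr hγ0 hγ1 hπ hsingleton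
        (fun _ _ ↦ singleton_nonempty _) hV
    calc γ / (1 - γ) * osc V * √(2 * ε)
        ≤ γ / (1 - γ) * (hi / (1 - γ) - lo / (1 - γ)) * √(2 * ε) := by gcongr
      _ = γ / (1 - γ) ^ 2 * (hi - lo) * √(2 * ε) := by field_simp

lemma isFixedPt_robustEval_singleton_iff :
    IsFixedPt (robustEval r γ π fun s a ↦ {phat s a}) V ↔
      ∀ s, V s = ∑ a, π s a * (r s a + γ * ∑ s', phat s a s' * V s') := by
  simp only [IsFixedPt, funext_iff, robustEval, worstMean_singleton, eq_comm]

lemma worstMean_klBall_eq_sInf {q : S → ℝ} (hq : ∀ s, q s ≠ 0) :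
    worstMean (klBall q ε) V =
      sInf {v : ℝ | ∃ p : S → ℝ, (∀ s, 0 ≤ p s) ∧ (∑ s, p s = 1) ∧
        (∑ s, p s * Real.log (p s / q s)) ≤ ε ∧ v = ∑ s, p s * V s} := by
  refine congrArg sInf ?_
  ext v
  simp [klBall, stdSimplex, discreteKL, hq, and_assoc, eq_comm (b := v)]

lemma isFixedPt_robustEval_klBall_iff (hphat : ∀ s a s', phat s a s' ≠ 0) :
    IsFixedPt (robustEval r γ π fun s a ↦ klBall (phat s a) ε) V ↔
      ∀ s, V s = ∑ a, π s a * (r s a + γ *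
        sInf {v : ℝ | ∃ p : S → ℝ, (∀ s', 0 ≤ p s') ∧ (∑ s', p s' = 1) ∧
          (∑ s', p s' * Real.log (p s' / phat s a s')) ≤ ε ∧ v = ∑ s', p s' * V s'}) := by
  simp only [IsFixedPt, funext_iff, robustEval, worstMean_klBall_eq_sInf (hphat _ _), eq_comm]

end ValueDrop

/-- robust value drop bound for KL-ball uncertainty sets.
`V^π_p̂` is the fixed point of the standard evaluation operator under the nominal
kernel `p̂`, `V^π_{P_ε}` is the fixed point of the robust evaluation operator with
the KL-ball uncertainty sets `P_ε(s,a) = { p ∈ Δ_S : D(p‖p̂(·|s,a)) ≤ ε }`, and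
`osc(V) = max V − min V`. -/
theorem robust_value_drop {S A : Type*} [Fintype S] [Fintype A]
    [Nonempty S] [Nonempty A]
    (r : S → A → ℝ) (hr : ∀ s a, 0 ≤ r s a ∧ r s a ≤ 1)
    (γ : ℝ) (hγ0 : 0 < γ) (hγ1 : γ < 1)
    (ε : ℝ) (hε : 0 < ε)
    (phat : S → A → S → ℝ)
    (hphat_pos : ∀ s a s', 0 < phat s a s')
    (hphat_sum : ∀ s a, ∑ s', phat s a s' = 1)
    (π : S → A → ℝ) (hπnn : ∀ s a, 0 ≤ π s a) (hπsum : ∀ s, ∑ a, π s a = 1)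
    (Vhat : S → ℝ)
    (hVhat : ∀ s, Vhat s = ∑ a, π s a * (r s a + γ * ∑ s', phat s a s' * Vhat s'))
    (Vrob : S → ℝ)
    (hVrob : ∀ s, Vrob s = ∑ a, π s a * (r s a + γ *
      sInf {v : ℝ | ∃ p : S → ℝ, (∀ s', 0 ≤ p s') ∧ (∑ s', p s' = 1) ∧
        (∑ s', p s' * Real.log (p s' / phat s a s')) ≤ ε ∧
        v = ∑ s', p s' * Vrob s'})) :
    (∀ s, 0 ≤ Vhat s - Vrob s) ∧
    (∀ s, Vhat s - Vrob s ≤ (γ / (1 - γ)) *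
      (Finset.univ.sup' Finset.univ_nonempty Vhat -
        Finset.univ.inf' Finset.univ_nonempty Vhat) * Real.sqrt (2 * ε)) ∧
    ((γ / (1 - γ)) *
      (Finset.univ.sup' Finset.univ_nonempty Vhat -
        Finset.univ.inf' Finset.univ_nonempty Vhat) * Real.sqrt (2 * ε) ≤
      (γ / (1 - γ) ^ 2) * Real.sqrt (2 * ε)) := by
  have hdrop := robust_value_drop_general hr hγ0.le hγ1 hε.le
    (fun s a ↦ ⟨fun s' ↦ (hphat_pos s a s').le, hphat_sum s a⟩) (fun s ↦ ⟨hπnn s, hπsum s⟩)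
    (isFixedPt_robustEval_singleton_iff.2 hVhat)
    ((isFixedPt_robustEval_klBall_iff fun s a s' ↦ (hphat_pos s a s').ne').2 hVrob)
  simpa only [osc, sub_zero, mul_one] using hdrop
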